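/- Let N be a positive integer, I R : Fin N → ℕ families of positive integers, and suppose a tensor X : (∀ n : Fin N, Fin (I n)) → ℝ admits a Tucker decomposition with core G : (∀ n : Fin N, Fin (R n)) → ℝ and factor matrices A n : Fin (I n) → Fin (R n) → ℝ, i.e., X i = ∑_{r : ∀ n, Fin (R n)} G r * ∏_{n : Fin N} A n (i n) (r n). Then for every mode k : Fin N, the mode-k unfolding of X has matrix rank at most the rank of the factor matrix A k (viewed as a matrix of size I k × R k). -/

import Mathlib

/-- The generalized unfolding of a tensor `X` along a subset `S` of its modes:
rows are indexed by the multi-indices of the modes in `S`, columns by the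
multi-indices of the remaining modes. -/
def unfolding {N : ℕ} (I : Fin N → ℕ) (S : Finset (Fin N))
    (X : (∀ n : Fin N, Fin (I n)) → ℝ) :
    Matrix ((n : {m : Fin N // m ∈ S}) → Fin (I n.val))
           ((n : {m : Fin N // m ∉ S}) → Fin (I n.val)) ℝ :=
  Matrix.of fun r c =>
    X (fun n => if h : n ∈ S then r ⟨n, h⟩ else c ⟨n, h⟩)

/-!
Grouping the modes by membership in `S`, a Tucker decomposition of `X` becomes the matrix identity
`X_(S) = (⨂_{n ∈ S} A n) * G_(S) * (⨂_{n ∉ S} A n)ᵀ`. The rank of `X_(S)` is therefore at most that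
of `⨂_{n ∈ S} A n`, which in turn is at most `∏_{n ∈ S} rank (A n)`: by the mixed-product property,
factoring each `A n` through a space of dimension `rank (A n)` factors the Kronecker product through
a space whose dimension is the product of these ranks.
-/

section PiKronecker

variable {ι α : Type*} [Fintype ι] {l m : ι → Type*}

/-- The Kronecker product of a finite family of matrices, indexed by multi-indices: the analogue
of `Matrix.kronecker` for more than two factors. -/
def piKronecker [CommMonoid α] (A : ∀ n, Matrix (l n) (m n) α) : Matrix (∀ n, l n) (∀ n, m n) α :=
  Matrix.of fun i j => ∏ n, A n (i n) (j n)

theorem piKronecker_apply [CommMonoid α] (A : ∀ n, Matrix (l n) (m n) α)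
    (i : ∀ n, l n) (j : ∀ n, m n) :
    piKronecker A i j = ∏ n, A n (i n) (j n) :=
  rfl

theorem piKronecker_mul [CommSemiring α] [DecidableEq ι] {o : ι → Type*} [∀ n, Fintype (m n)]
    (A : ∀ n, Matrix (l n) (m n) α) (B : ∀ n, Matrix (m n) (o n) α) :
    piKronecker (fun n => A n * B n) = piKronecker A * piKronecker B := by
  ext i k
  simp only [piKronecker_apply, Matrix.mul_apply, Fintype.prod_sum, Finset.prod_mul_distrib]

theorem piKronecker_piEquivPiSubtypeProd_symm [CommMonoid α] (p : ι → Prop) [DecidablePred p]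
    [Fintype {n // p n}] [Fintype {n // ¬p n}] (A : ∀ n, Matrix (l n) (m n) α)
    (i : (∀ n : {n // p n}, l n) × ∀ n : {n // ¬p n}, l n)
    (j : (∀ n : {n // p n}, m n) × ∀ n : {n // ¬p n}, m n) :
    piKronecker A ((Equiv.piEquivPiSubtypeProd p l).symm i)
        ((Equiv.piEquivPiSubtypeProd p m).symm j) =
      piKronecker (fun n : {n // p n} => A n) i.1 j.1 *
        piKronecker (fun n : {n // ¬p n} => A n) i.2 j.2 := by
  simp only [piKronecker_apply]
  rw [← (Equiv.sumCompl p).prod_comp, Fintype.prod_sum_type]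
  congr 1 <;> refine Fintype.prod_congr _ _ fun n => ?_ <;> simp [n.2]

end PiKronecker

section Rank

variable {K : Type*} [Field K]

theorem exists_rank_factorization {m n : Type*} [Fintype n] (A : Matrix m n K) :
    ∃ (B : Matrix m (Fin A.rank) K) (C : Matrix (Fin A.rank) n K), A = B * C := by
  classical
  let b : Module.Basis (Fin A.rank) K A.mulVecLin.range := Module.finBasis K _
  let column (j : n) : A.mulVecLin.range := A.mulVecLin.rangeRestrict (Pi.single j 1)
  refine ⟨.of fun i r => (b r : m → K) i, .of fun r j => b.repr (column j) r, ?_⟩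
  ext i j
  have column_expansion : (column j : m → K) = ∑ r, b.repr (column j) r • (b r : m → K) := by
    conv_lhs => rw [← b.sum_repr (column j)]
    simp only [Submodule.coe_sum, Submodule.coe_smul]
  calc A i j = (column j : m → K) i := by simp [column]
    _ = ∑ r, (b r : m → K) i * b.repr (column j) r := by
      rw [column_expansion]
      simp only [Finset.sum_apply, Pi.smul_apply, smul_eq_mul, mul_comm]

theorem rank_piKronecker_le {ι : Type*} [Fintype ι] [DecidableEq ι] {l m : ι → Type*}
    [∀ n, Fintype (m n)] (A : ∀ n, Matrix (l n) (m n) K) :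
    (piKronecker A).rank ≤ ∏ n, (A n).rank := by
  choose B C hBC using fun n => exists_rank_factorization (A n)
  calc (piKronecker A).rank = (piKronecker B * piKronecker C).rank := by
        rw [← piKronecker_mul, ← funext hBC]
    _ ≤ (piKronecker B).rank := Matrix.rank_mul_le_left _ _
    _ ≤ Fintype.card (∀ n, Fin (A n).rank) := Matrix.rank_le_card_width _
    _ = ∏ n, (A n).rank := by simp only [Fintype.card_pi, Fintype.card_fin]

end Rank

section Tucker

variable {N : ℕ} {I R : Fin N → ℕ} {X : (∀ n, Fin (I n)) → ℝ} {G : (∀ n, Fin (R n)) → ℝ}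
  {A : ∀ n, Fin (I n) → Fin (R n) → ℝ}

theorem unfolding_apply (X : (∀ n, Fin (I n)) → ℝ) (S : Finset (Fin N))
    (i : ∀ n : {n // n ∈ S}, Fin (I n)) (j : ∀ n : {n // n ∉ S}, Fin (I n)) :
    unfolding I S X i j = X ((Equiv.piEquivPiSubtypeProd (· ∈ S) _).symm (i, j)) :=
  rfl

theorem unfolding_eq_piKronecker_mul_unfolding_mul
    (hX : ∀ i, X i = ∑ r, G r * ∏ n, A n (i n) (r n)) (S : Finset (Fin N)) :
    unfolding I S X =
      piKronecker (fun n : {n // n ∈ S} => Matrix.of (A n)) * unfolding R S G *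
        (piKronecker fun n : {n // n ∉ S} => Matrix.of (A n)).transpose := by
  ext i j
  let mergeI := (Equiv.piEquivPiSubtypeProd (· ∈ S) fun n => Fin (I n)).symm
  let mergeR := (Equiv.piEquivPiSubtypeProd (· ∈ S) fun n => Fin (R n)).symm
  calc unfolding I S X i j
      = ∑ r, G r * piKronecker (fun n => Matrix.of (A n)) (mergeI (i, j)) r := hX _
    _ = ∑ b, ∑ a, G (mergeR (a, b)) *
          piKronecker (fun n => Matrix.of (A n)) (mergeI (i, j)) (mergeR (a, b)) := by
      rw [← mergeR.sum_comp, Fintype.sum_prod_type_right]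
    _ = _ := by
      simp only [mergeI, mergeR, piKronecker_piEquivPiSubtypeProd_symm, Matrix.mul_apply,
        Matrix.transpose_apply, unfolding_apply, Finset.sum_mul]
      exact Fintype.sum_congr _ _ fun b => Fintype.sum_congr _ _ fun a => by ring

theorem tucker_mode_unfolding_rank_le_factor_rank_general
    (hX : ∀ i, X i = ∑ r, G r * ∏ n, A n (i n) (r n)) (S : Finset (Fin N)) :
    (unfolding I S X).rank ≤ ∏ n ∈ S, (Matrix.of (A n)).rank := by
  rw [unfolding_eq_piKronecker_mul_unfolding_mul hX S, Matrix.mul_assoc, ← Finset.prod_coe_sort]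
  exact (Matrix.rank_mul_le_left _ _).trans (rank_piKronecker_le _)

end Tucker

/-- If an order-`N` tensor admits a Tucker decomposition, then its mode-`k`
unfolding has matrix rank at most the rank of the `k`-th factor matrix. -/
theorem tucker_mode_unfolding_rank_le_factor_rank
    (N : ℕ) (hN : 0 < N)
    (I R : Fin N → ℕ) (hI : ∀ n : Fin N, 0 < I n) (hR : ∀ n : Fin N, 0 < R n)
    (X : (∀ n : Fin N, Fin (I n)) → ℝ)
    (G : (∀ n : Fin N, Fin (R n)) → ℝ)
    (A : ∀ n : Fin N, Fin (I n) → Fin (R n) → ℝ)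
    (hX : ∀ i : ∀ n : Fin N, Fin (I n),
      X i = ∑ r : ∀ n : Fin N, Fin (R n), G r * ∏ n : Fin N, A n (i n) (r n))
    (k : Fin N) :
    (unfolding I ({k} : Finset (Fin N)) X).rank ≤
      (Matrix.of (A k) : Matrix (Fin (I k)) (Fin (R k)) ℝ).rank := by
  simpa only [Finset.prod_singleton] using
    tucker_mode_unfolding_rank_le_factor_rank_general hX {k}
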